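/- Let T be a rooted tree on a countably infinite vertex set X and let P be the set of all rooted paths of T. Then 𝒮(T) ≈ ∅ (the empty subset of I_X) if and only if P is countable. -/

import Mathlib

open Set Cardinal

universe u

/-- A chart on `X` (an element of the symmetric inverse monoid `I_X`): a partial
bijection between subsets of `X`, encoded as a functional, injective relation,
i.e. a set of pairs. -/
structure Chart (X : Type u) : Type u where
  rel : Set (X × X)
  functional : ∀ ⦃x y y'⦄, (x, y) ∈ rel → (x, y') ∈ rel → y = y'
  injective : ∀ ⦃x x' y⦄, (x, y) ∈ rel → (x', y) ∈ rel → x = x'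

namespace Chart

variable {X : Type u}

/-- Composition of charts: compose wherever possible. -/
instance : Mul (Chart X) :=
  ⟨fun f g =>
    { rel := {p | ∃ y, (p.1, y) ∈ f.rel ∧ (y, p.2) ∈ g.rel}
      functional := by
        rintro x y y' ⟨z, hz1, hz2⟩ ⟨w, hw1, hw2⟩
        obtain rfl : z = w := f.functional hz1 hw1
        exact g.functional hz2 hw2
      injective := by
        rintro x x' y ⟨z, hz1, hz2⟩ ⟨w, hw1, hw2⟩
        obtain rfl : z = w := g.injective hz2 hw2
        exact f.injective hz1 hw1 }⟩

/-- The inverse chart. -/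
instance : Inv (Chart X) :=
  ⟨fun f =>
    { rel := {p | (p.2, p.1) ∈ f.rel}
      functional := fun _ _ _ h h' => f.injective h h'
      injective := fun _ _ _ h h' => f.functional h h' }⟩

/-- The domain of a chart. -/
def dom (f : Chart X) : Set X := {x | ∃ y, (x, y) ∈ f.rel}

/-- The range (image) of a chart. -/
def ran (f : Chart X) : Set X := {y | ∃ x, (x, y) ∈ f.rel}

end Chart

/-- Membership in the subsemigroup of `I_X` generated by a set of charts. -/
inductive InGen {X : Type u} (S : Set (Chart X)) : Chart X → Prop
  | base {f : Chart X} : f ∈ S → InGen S f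
  | mul {f g : Chart X} : InGen S f → InGen S g → InGen S (f * g)

/-- The subsemigroup of `I_X` generated by a set of charts. -/
def Sgen {X : Type u} (S : Set (Chart X)) : Set (Chart X) := {f | InGen S f}

/-- The Bergman–Shelah preorder `S ≼ T` on subsets of `I_X`: there is a countable
subset `U ⊆ I_X` with `S` contained in the subsemigroup generated by `T ∪ U`. -/
def BSleq {X : Type u} (S T : Set (Chart X)) : Prop :=
  ∃ U : Set (Chart X), U.Countable ∧ S ⊆ Sgen (T ∪ U)

/-- Bergman–Shelah equivalence `S ≈ T`. -/
def BSequiv {X : Type u} (S T : Set (Chart X)) : Prop := BSleq S T ∧ BSleq T S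

/-- The Bergman–Shelah preorder relative to a cardinal `κ`: `S ≼_κ T` iff there is
`U ⊆ I_X` with `|U| < κ` and `S` contained in the subsemigroup generated by `T ∪ U`. -/
def BSleqC {X : Type u} (κ : Cardinal.{u}) (S T : Set (Chart X)) : Prop :=
  ∃ U : Set (Chart X), #↥U < κ ∧ S ⊆ Sgen (T ∪ U)

/-- Bergman–Shelah equivalence relative to a cardinal `κ`. -/
def BSequivC {X : Type u} (κ : Cardinal.{u}) (S T : Set (Chart X)) : Prop :=
  BSleqC κ S T ∧ BSleqC κ T S

/-- A chart is a permutation of `X` if it is everywhere defined and surjective. -/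
def IsPermChart {X : Type u} (f : Chart X) : Prop :=
  (∀ x : X, ∃ y, (x, y) ∈ f.rel) ∧ ∀ y : X, ∃ x, (x, y) ∈ f.rel

/-- The partwise stabiliser of a family of subsets of `X`: all permutations of `X`
mapping each member of the family onto itself. -/
def PStab {X : Type u} (P : Set (Set X)) : Set (Chart X) :=
  {f | IsPermChart f ∧ ∀ B ∈ P, {y | ∃ x ∈ B, (x, y) ∈ f.rel} = B}

/-- A subset of `I_X` closed under composition. -/
def IsSubsemigroup {X : Type u} (S : Set (Chart X)) : Prop :=
  ∀ f ∈ S, ∀ g ∈ S, f * g ∈ S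

/-- A subsemigroup of `I_X` closed under inversion. -/
def IsInverseSubsemigroup {X : Type u} (S : Set (Chart X)) : Prop :=
  IsSubsemigroup S ∧ ∀ f ∈ S, f⁻¹ ∈ S

/-- The orbit of a point under a set of charts: `{x} ∪ {xf : f ∈ M, x ∈ dom f}`. -/
def ChartOrbit {X : Type u} (M : Set (Chart X)) (x : X) : Set X :=
  insert x {y | ∃ f ∈ M, (x, y) ∈ f.rel}

/-- The cone of a point under a set of charts: `{xs : s ∈ S, x ∈ dom s}`. -/
def ChartCone {X : Type u} (S : Set (Chart X)) (x : X) : Set X :=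
  {y | ∃ f ∈ S, (x, y) ∈ f.rel}

/-- The semilattice of idempotents of `I_X`: the partial identity charts. -/
def EX (X : Type u) : Set (Chart X) := {f | ∀ x y : X, (x, y) ∈ f.rel → y = x}

/-- A `κ`-uniform partition: every part has cardinality `κ`. -/
def IsUniformPartition {X : Type u} (κ : Cardinal.{u}) (P : Set (Set X)) : Prop :=
  Setoid.IsPartition P ∧ ∀ B ∈ P, #↥B = κ

/-- A `κ`-unbounded partition: all parts have cardinality `< κ` but no cardinal
`c < κ` bounds the cardinalities of all parts. -/
def IsUnboundedPartition {X : Type u} (κ : Cardinal.{u}) (P : Set (Set X)) : Prop :=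
  Setoid.IsPartition P ∧ (∀ B ∈ P, #↥B < κ) ∧ ¬∃ c < κ, ∀ B ∈ P, #↥B ≤ c

/-- A `κ`-bounded partition: some cardinal `c < κ` bounds the cardinalities of
all parts. -/
def IsBoundedPartition {X : Type u} (κ : Cardinal.{u}) (P : Set (Set X)) : Prop :=
  Setoid.IsPartition P ∧ ∃ c < κ, ∀ B ∈ P, #↥B ≤ c

/-- A rooted tree on (a subset of) `X`, encoded via its parent function: every
vertex reaches the root by finitely many applications of `par`. -/
structure RTree (X : Type u) : Type u where
  verts : Set X
  root : X
  root_mem : root ∈ verts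
  par : X → X
  par_mem : ∀ x ∈ verts, par x ∈ verts
  par_root : par root = root
  par_reaches : ∀ x ∈ verts, ∃ n : ℕ, par^[n] x = root

namespace RTree

variable {X : Type u}

/-- `T.anc x y` : `x` is an ancestor of `y` (or `x = y`), i.e. `x` lies on the
rooted path to `y`. -/
def anc (T : RTree X) (x y : X) : Prop := ∃ n : ℕ, T.par^[n] y = x

/-- The level of a vertex: its distance to the root. -/
noncomputable def level (T : RTree X) (x : X) : ℕ := sInf {n : ℕ | T.par^[n] x = T.root}

/-- The children of a vertex. -/
def children (T : RTree X) (x : X) : Set X :=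
  {y | y ∈ T.verts ∧ T.par y = x ∧ y ≠ x}

/-- The neighbours of a vertex in the tree (its children together with its
parent, if the vertex is not the root); the degree of the vertex is the size
of this set. -/
def nbhd (T : RTree X) (x : X) : Set X :=
  {y | y ∈ T.verts ∧ ((T.par y = x ∧ y ≠ x) ∨ (T.par x = y ∧ x ≠ y))}

/-- `P` is the vertex set of a (finite or infinite) path of `T` starting at the
root: a nonempty set of vertices closed under taking parents and linearly
ordered by ancestry. -/
def IsRootedPath (T : RTree X) (P : Set X) : Prop :=
  P.Nonempty ∧ P ⊆ T.verts ∧ (∀ x ∈ P, T.par x ∈ P) ∧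
    ∀ x ∈ P, ∀ y ∈ P, T.anc x y ∨ T.anc y x

end RTree

/-- `T'` is a subtree of `T`: a rooted tree on a subset of the vertices of `T`,
with the same root and the same parent relation. -/
def IsSubtree {X : Type u} (T' T : RTree X) : Prop :=
  T'.verts ⊆ T.verts ∧ T'.root = T.root ∧ ∀ x ∈ T'.verts, T'.par x = T.par x

/-- `Q` is a quasi-subtree of `T`: a rooted tree on a subset of the vertices of
`T` preserving the ancestry relation and the levels of `T`. -/
def IsQuasiSubtree {X : Type u} (Q T : RTree X) : Prop :=
  Q.verts ⊆ T.verts ∧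
    (∀ x ∈ Q.verts, ∀ y ∈ Q.verts, (Q.anc x y ↔ T.anc x y)) ∧
    ∀ x ∈ Q.verts, ∀ y ∈ Q.verts, (Q.level x = Q.level y ↔ T.level x = T.level y)

/-- Isomorphism of rooted trees: a bijection of the vertex sets mapping root to
root and commuting with the parent functions. -/
def RTreeIso {X : Type u} {Y : Type u} (T : RTree X) (R : RTree Y) : Prop :=
  ∃ φ : X → Y, Set.BijOn φ T.verts R.verts ∧ φ T.root = R.root ∧
    ∀ x ∈ T.verts, φ (T.par x) = R.par (φ x)

/-- The semigroup `𝒮(T)` of path-bijections of a rooted tree `T`: charts whose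
domain and range are vertex sets of rooted paths and which preserve levels. -/
def pathSg {X : Type u} (T : RTree X) : Set (Chart X) :=
  {f | (∃ P, T.IsRootedPath P ∧ Chart.dom f = P) ∧
    (∃ Q, T.IsRootedPath Q ∧ Chart.ran f = Q) ∧
    ∀ x y : X, (x, y) ∈ f.rel → T.level y = T.level x}

/-!
Words over a countable set of generators are countable in number, so `S ≈ ∅` just says that `S` is
countable. Level is injective along a rooted path, so a path-bijection is determined by its domain
and range, and `𝒮(T)` embeds into the set of pairs of rooted paths; conversely every rooted path is
the domain of its partial identity, which lies in `𝒮(T)`.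
-/

theorem countable_submonoidClosure {M : Type*} [Monoid M] {s : Set M} (hs : s.Countable) :
    (Submonoid.closure s : Set M).Countable := by
  have := hs.to_subtype
  rw [Submonoid.closure_eq_mrange, MonoidHom.coe_mrange]
  exact countable_range _

namespace Chart

variable {X : Type u}

attribute [ext] Chart

theorem mem_rel_mul {f g : Chart X} {x z : X} :
    (x, z) ∈ (f * g).rel ↔ ∃ y, (x, y) ∈ f.rel ∧ (y, z) ∈ g.rel :=
  Iff.rfl

/-- The partial identity on a set `P`, an idempotent of `I_X`; on `univ` it is the unit of the
monoid `I_X`. -/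
def ofSet (P : Set X) : Chart X where
  rel := {p | p.1 ∈ P ∧ p.1 = p.2}
  functional := fun _ _ _ h h' => h.2.symm.trans h'.2
  injective := fun _ _ _ h h' => h.2.trans h'.2.symm

@[simp]
theorem mem_rel_ofSet {P : Set X} {x y : X} : (x, y) ∈ (ofSet P).rel ↔ x ∈ P ∧ x = y :=
  Iff.rfl

@[simp]
theorem dom_ofSet (P : Set X) : (ofSet P).dom = P := by
  ext x
  simp [dom]

@[simp]
theorem ran_ofSet (P : Set X) : (ofSet P).ran = P := by
  ext x
  simp [ran]

instance : One (Chart X) := ⟨ofSet univ⟩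

@[simp]
theorem mem_rel_one {x y : X} : (x, y) ∈ (1 : Chart X).rel ↔ x = y :=
  iff_of_eq (true_and _)

instance : Monoid (Chart X) where
  mul_assoc f g h := by
    ext ⟨x, y⟩
    simp only [mem_rel_mul]
    grind
  one_mul f := by
    ext ⟨x, y⟩
    simp [mem_rel_mul]
  mul_one f := by
    ext ⟨x, y⟩
    simp [mem_rel_mul]

theorem rel_subset_rel_of_injOn {α : Type*} {ℓ : X → α} {f g : Chart X}
    (hdom : f.dom ⊆ g.dom) (hran : f.ran ⊆ g.ran) (hℓ : InjOn ℓ g.ran)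
    (hf : ∀ x y, (x, y) ∈ f.rel → ℓ y = ℓ x) (hg : ∀ x y, (x, y) ∈ g.rel → ℓ y = ℓ x) :
    f.rel ⊆ g.rel := by
  rintro ⟨x, y⟩ hxy
  obtain ⟨y', hxy'⟩ := hdom ⟨y, hxy⟩
  obtain rfl : y = y' :=
    hℓ (hran ⟨x, hxy⟩) ⟨x, hxy'⟩ ((hf x y hxy).trans (hg x y' hxy').symm)
  exact hxy'

end Chart

section Generation

variable {X : Type u} {S : Set (Chart X)}

theorem sgen_subset_submonoidClosure : Sgen S ⊆ Submonoid.closure S := by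
  intro f hf
  induction (hf : InGen S f) with
  | base hf => exact Submonoid.subset_closure hf
  | mul _ _ ihf ihg => exact (Submonoid.closure S).mul_mem ihf ihg

theorem countable_sgen (hS : S.Countable) : (Sgen S).Countable :=
  (countable_submonoidClosure hS).mono sgen_subset_submonoidClosure

theorem bsequiv_empty_iff_countable : BSequiv S ∅ ↔ S.Countable := by
  constructor
  · rintro ⟨⟨U, hU, hSU⟩, -⟩
    exact (countable_sgen (countable_empty.union hU)).mono hSU
  · intro hS
    exact ⟨⟨S, hS, fun f hf => .base (.inr hf)⟩, ∅, countable_empty, empty_subset _⟩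

end Generation

namespace RTree

variable {X : Type u} {T : RTree X}

theorem iterate_par_eq_root_iff {x : X} (hx : x ∈ T.verts) {n : ℕ} :
    T.par^[n] x = T.root ↔ T.level x ≤ n := by
  refine ⟨fun h => Nat.sInf_le h, fun h => ?_⟩
  have hlevel : T.par^[T.level x] x = T.root := Nat.sInf_mem (T.par_reaches x hx)
  rw [← Nat.sub_add_cancel h, Function.iterate_add_apply, hlevel,
    Function.iterate_fixed T.par_root]

theorem level_iterate_par {x : X} (hx : x ∈ T.verts) (n : ℕ) :
    T.level (T.par^[n] x) = T.level x - n := by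
  have hpar : T.par^[n] x ∈ T.verts := MapsTo.iterate T.par_mem n hx
  refine eq_of_forall_ge_iff fun m => ?_
  rw [← iterate_par_eq_root_iff hpar, ← Function.iterate_add_apply, iterate_par_eq_root_iff hx,
    tsub_le_iff_right]

theorem eq_of_anc_of_level_eq {x y : X} (hy : y ∈ T.verts) (hxy : T.anc x y)
    (hlevel : T.level x = T.level y) : x = y := by
  obtain ⟨n, rfl⟩ := hxy
  rw [level_iterate_par hy] at hlevel
  obtain rfl | hroot : n = 0 ∨ T.level y = 0 := by lia
  · rfl
  · have hy_root : y = T.root := (iterate_par_eq_root_iff (n := 0) hy).2 hroot.le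
    rw [hy_root, Function.iterate_fixed T.par_root]

theorem IsRootedPath.injOn_level {P : Set X} (hP : T.IsRootedPath P) : InjOn T.level P := by
  obtain ⟨-, hverts, -, hanc⟩ := hP
  intro x hx y hy hlevel
  rcases hanc x hx y hy with h | h
  · exact eq_of_anc_of_level_eq (hverts hy) h hlevel
  · exact (eq_of_anc_of_level_eq (hverts hx) h hlevel.symm).symm

end RTree

section PathBijections

variable {X : Type u} {T : RTree X}

theorem mem_pathSg_iff {f : Chart X} :
    f ∈ pathSg T ↔ T.IsRootedPath f.dom ∧ T.IsRootedPath f.ran ∧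
      ∀ x y, (x, y) ∈ f.rel → T.level y = T.level x := by
  simp [pathSg]

theorem ofSet_mem_pathSg {P : Set X} (hP : T.IsRootedPath P) : Chart.ofSet P ∈ pathSg T := by
  simp +contextual [mem_pathSg_iff, hP]

theorem injOn_dom_ran_pathSg (T : RTree X) :
    InjOn (fun f : Chart X => (f.dom, f.ran)) (pathSg T) := by
  intro f hf g hg hfg
  obtain ⟨hdom, hran⟩ := Prod.mk.inj hfg
  obtain ⟨-, hf_ran, hf_level⟩ := mem_pathSg_iff.1 hf
  obtain ⟨-, hg_ran, hg_level⟩ := mem_pathSg_iff.1 hg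
  refine Chart.ext (Subset.antisymm ?_ ?_)
  · exact Chart.rel_subset_rel_of_injOn hdom.subset hran.subset hg_ran.injOn_level
      hf_level hg_level
  · exact Chart.rel_subset_rel_of_injOn hdom.superset hran.superset hf_ran.injOn_level
      hg_level hf_level

theorem countable_pathSg_iff :
    (pathSg T).Countable ↔ {P : Set X | T.IsRootedPath P}.Countable := by
  constructor
  · intro hS
    refine (hS.image Chart.dom).mono fun P hP => ?_
    exact ⟨Chart.ofSet P, ofSet_mem_pathSg hP, Chart.dom_ofSet P⟩
  · intro hP
    have hmaps : MapsTo (fun f : Chart X => (f.dom, f.ran)) (pathSg T)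
        ({P | T.IsRootedPath P} ×ˢ {P | T.IsRootedPath P}) := fun f hf =>
      ⟨(mem_pathSg_iff.1 hf).1, (mem_pathSg_iff.1 hf).2.1⟩
    exact hmaps.countable_of_injOn (injOn_dom_ran_pathSg T) (hP.prod hP)

end PathBijections

theorem stmt11_general {X : Type u} (T : RTree X) :
    BSequiv (pathSg T) (∅ : Set (Chart X)) ↔ {P : Set X | T.IsRootedPath P}.Countable :=
  bsequiv_empty_iff_countable.trans countable_pathSg_iff

/-- for a rooted tree `T` on a countably infinite vertex set `X`,
`𝒮(T) ≈ ∅` if and only if the set of rooted paths of `T` is countable. -/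
theorem stmt11 {X : Type u} [Countable X] [Infinite X] (T : RTree X)
    (hT : T.verts = Set.univ) :
    BSequiv (pathSg T) (∅ : Set (Chart X)) ↔
      {P : Set X | T.IsRootedPath P}.Countable :=
  stmt11_general T
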